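/- Let p_1, p_2, p_3 be three distinct non-collinear points of P^2 and let Z' = 2p_1 + 2p_2 + p_3 be the fat points scheme with double points at p_1 and p_2 and a simple point at p_3. Then the Waldschmidt constant satisfies α̂(I(Z')) ≥ 5/2. -/

import Mathlib

noncomputable section

open MvPolynomial

/-- `alpha J` is the least degree of a nonzero homogeneous form in the ideal `J`. -/
def alpha {kk : Type*} [Field kk] {σ : Type*} (J : Ideal (MvPolynomial σ kk)) : ℕ :=
  sInf {d : ℕ | ∃ f ∈ J, f ≠ 0 ∧ MvPolynomial.IsHomogeneous f d}

/-- The homogeneous (prime) ideal of the point of `ℙ²` represented by the nonzero vector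
`p`, generated by the linear forms vanishing at `p`. -/
def pointIdeal {kk : Type*} [Field kk] (p : Fin 3 → kk) : Ideal (MvPolynomial (Fin 3) kk) :=
  Ideal.span {f | f.IsHomogeneous 1 ∧ MvPolynomial.eval p f = 0}

/-- Two nonzero vectors represent the same point of `ℙ²`. -/
def projEq {kk : Type*} [Field kk] (p q : Fin 3 → kk) : Prop :=
  ∃ c : kk, c ≠ 0 ∧ q = c • p

/-!
The linear change of coordinates that moves `p₁, p₂, p₃` to the coordinate points turns `I(pᵢ)`
into the monomial ideal generated by the variables other than `xᵢ`. A monomial `x^d` occurring in a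
form of degree `D` vanishing to order `mᵢ` at `pᵢ` therefore satisfies `mᵢ + dᵢ ≤ D`, and summing
over the three points gives `m₁ + m₂ + m₃ ≤ 2D`. For the multiplicities `2k, 2k, k` this reads
`5k ≤ 2D`.
-/

section MonomialIdeals

variable {R σ : Type*} [CommSemiring R]

theorem span_X_image_pow (s : Set σ) (n : ℕ) :
    Ideal.span (X '' s : Set (MvPolynomial σ R)) ^ n =
      Ideal.span ((fun e => monomial e (1 : R)) '' {e | e.degree = n ∧ ↑e.support ⊆ s}) := by
  rw [Ideal.span, Submodule.span_pow, Finsupp.image_pow_eq_finsuppProd_image]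
  simp only [monomial_eq, C_1, one_mul]

theorem add_apply_le_degree_of_mem_span_X_compl_pow {i : σ} {n : ℕ} {f : MvPolynomial σ R}
    (hf : f ∈ Ideal.span (X '' {i}ᶜ : Set (MvPolynomial σ R)) ^ n) {d : σ →₀ ℕ}
    (hd : d ∈ f.support) : n + d i ≤ d.degree := by
  rw [span_X_image_pow, mem_ideal_span_monomial_image] at hf
  obtain ⟨e, ⟨rfl, he⟩, hed⟩ := hf d hd
  have hei : e i = 0 := by
    by_contra h
    exact he (Finsupp.mem_support_iff.2 h) rfl
  obtain ⟨c, rfl⟩ := le_iff_exists_add.1 hed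
  simpa [hei] using Finsupp.le_degree i c

theorem sum_add_le_card_mul_of_mem_span_X_compl_pow [Fintype σ] {m : σ → ℕ} {n : ℕ}
    {f : MvPolynomial σ R} (hf : ∀ i, f ∈ Ideal.span (X '' {i}ᶜ : Set (MvPolynomial σ R)) ^ m i)
    (hf0 : f ≠ 0) (hn : f.IsHomogeneous n) : ∑ i, m i + n ≤ Fintype.card σ * n := by
  obtain ⟨d, hd⟩ := support_nonempty.2 hf0
  have hdn : d.degree = n := (hn.degree_eq_sum_deg_support hd).symm
  calc ∑ i, m i + n = ∑ i, (m i + d i) := by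
        rw [Finset.sum_add_distrib, ← Finsupp.degree_eq_sum, hdn]
    _ ≤ ∑ _i : σ, n := Finset.sum_le_sum fun i _ =>
        hdn ▸ add_apply_le_degree_of_mem_span_X_compl_pow (hf i) hd
    _ = Fintype.card σ * n := by simp

end MonomialIdeals

section LinearSubstitution

variable {R ι κ σ : Type*} [CommSemiring R] [Fintype ι] [Fintype κ]

/-- The linear substitution `xᵢ ↦ ∑ⱼ P j i • xⱼ`, that is, pullback of polynomial functions along
the linear map sending the `j`-th coordinate point to the `j`-th row of `P`. -/
def pullbackRows (P : Matrix ι σ R) : MvPolynomial σ R →ₐ[R] MvPolynomial ι R :=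
  bind₁ P.transpose.toMvPolynomial

theorem isHomogeneous_pullbackRows (P : Matrix ι σ R) {f : MvPolynomial σ R} {n : ℕ}
    (hf : f.IsHomogeneous n) : (pullbackRows P f).IsHomogeneous n := by
  simpa only [one_mul, pullbackRows, bind₁] using
    hf.aeval _ P.transpose.toMvPolynomial_isHomogeneous

theorem pullbackRows_pullbackRows (Q : Matrix κ ι R) (P : Matrix ι σ R) (f : MvPolynomial σ R) :
    pullbackRows Q (pullbackRows P f) = pullbackRows (Q * P) f := by
  simp only [pullbackRows, bind₁_bind₁, Matrix.transpose_mul, ← Matrix.toMvPolynomial_mul]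

theorem pullbackRows_one [DecidableEq ι] (f : MvPolynomial ι R) :
    pullbackRows (1 : Matrix ι ι R) f = f := by
  simp [pullbackRows]

theorem pullbackRows_eq_sum_of_isHomogeneous_one (P : Matrix ι σ R) {g : MvPolynomial σ R}
    (hg : g.IsHomogeneous 1) : pullbackRows P g = ∑ j, C (eval (P j) g) * X j := by
  rw [← mem_homogeneousSubmodule, homogeneousSubmodule_one_eq_span_X] at hg
  induction hg using Submodule.span_induction with
  | mem g hg =>
    obtain ⟨i, rfl⟩ := hg
    simp [pullbackRows, Matrix.toMvPolynomial, C_mul_X_eq_monomial]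
  | zero => simp
  | add g h _ _ ihg ihh => simp only [map_add, ihg, ihh, add_mul, Finset.sum_add_distrib]
  | smul a g _ ih =>
    rw [map_smul, ih, Finset.smul_sum]
    simp only [smul_eval, C_mul', mul_smul]

theorem pullbackRows_mem_span_X_compl (P : Matrix ι σ R) (i : ι) {g : MvPolynomial σ R}
    (hg : g.IsHomogeneous 1) (hgi : eval (P i) g = 0) :
    pullbackRows P g ∈ Ideal.span (X '' {i}ᶜ : Set (MvPolynomial ι R)) := by
  rw [pullbackRows_eq_sum_of_isHomogeneous_one P hg]
  refine Ideal.sum_mem _ fun j _ => ?_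
  obtain rfl | hji := eq_or_ne j i
  · simp [hgi]
  · exact Ideal.mul_mem_left _ _ (Ideal.subset_span (Set.mem_image_of_mem X hji))

end LinearSubstitution

theorem pullbackRows_injective {R ι : Type*} [CommRing R] [Fintype ι] [DecidableEq ι]
    {P : Matrix ι ι R} (hP : IsUnit P.det) : Function.Injective (pullbackRows P) :=
  Function.LeftInverse.injective (g := pullbackRows P⁻¹) fun f => by
    rw [pullbackRows_pullbackRows, Matrix.nonsing_inv_mul P hP, pullbackRows_one]

theorem exists_isHomogeneous_one_eval_row_eq_zero {R ι : Type*} [CommRing R] [IsDomain R]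
    [Fintype ι] [DecidableEq ι] {P : Matrix ι ι R} (hP : P.det = 0) :
    ∃ g : MvPolynomial ι R, g ≠ 0 ∧ g.IsHomogeneous 1 ∧ ∀ i, eval (P i) g = 0 := by
  obtain ⟨v, hv, hPv⟩ := Matrix.exists_mulVec_eq_zero_iff.2 hP
  have eval_form (w : ι → R) :
      eval w ((Matrix.replicateRow Unit v).toMvPolynomial ()) = w ⬝ᵥ v := by
    rw [Matrix.toMvPolynomial_eval_eq_apply, dotProduct_comm]
    rfl
  refine ⟨(Matrix.replicateRow Unit v).toMvPolynomial (), fun h => hv ?_,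
    Matrix.toMvPolynomial_isHomogeneous _ _, fun i => (eval_form _).trans (congrFun hPv i)⟩
  refine dotProduct_eq_zero v fun w => ?_
  rw [dotProduct_comm, ← eval_form, h, map_zero]

section Alpha

variable {kk : Type*} [Field kk]

theorem exists_isHomogeneous_alpha {σ : Type*} {J : Ideal (MvPolynomial σ kk)} {n : ℕ}
    {f : MvPolynomial σ kk} (hf : f ∈ J) (hf0 : f ≠ 0) (hn : f.IsHomogeneous n) :
    ∃ g ∈ J, g ≠ 0 ∧ g.IsHomogeneous (alpha J) :=
  Nat.sInf_mem (s := {d | ∃ g ∈ J, g ≠ 0 ∧ g.IsHomogeneous d}) ⟨n, f, hf, hf0, hn⟩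

theorem map_pullbackRows_pointIdeal_le {ι : Type*} [Fintype ι] (P : Matrix ι (Fin 3) kk) (i : ι) :
    (pointIdeal (P i)).map (pullbackRows P) ≤ Ideal.span (X '' {i}ᶜ) := by
  rw [pointIdeal, Ideal.map_span, Ideal.span_le]
  rintro _ ⟨g, ⟨hg, hgi⟩, rfl⟩
  exact pullbackRows_mem_span_X_compl P i hg hgi

theorem exists_isHomogeneous_one_mem_pointIdeal (p : Fin 3 → kk) :
    ∃ g ∈ pointIdeal p, g ≠ 0 ∧ g.IsHomogeneous 1 := by
  have hdet : (Matrix.of fun _ : Fin 3 => p).det = 0 :=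
    Matrix.det_zero_of_row_eq zero_ne_one rfl
  obtain ⟨g, hg0, hg, hgp⟩ := exists_isHomogeneous_one_eval_row_eq_zero hdet
  exact ⟨g, Ideal.subset_span ⟨hg, hgp 0⟩, hg0, hg⟩

/-- An ideal without nonzero forms has `alpha` equal to the junk value `0`, so a lower bound on
`alpha` has to exhibit a form. -/
theorem exists_isHomogeneous_mem_iInf_pointIdeal_pow {ι : Type*} [Fintype ι]
    (p : ι → Fin 3 → kk) (m : ι → ℕ) :
    ∃ f ∈ ⨅ i, pointIdeal (p i) ^ m i, f ≠ 0 ∧ f.IsHomogeneous (∑ i, m i) := by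
  choose g hgp hg0 hg using fun i => exists_isHomogeneous_one_mem_pointIdeal (p i)
  refine ⟨∏ i, g i ^ m i, Ideal.mem_iInf.2 fun i => ?_,
    Finset.prod_ne_zero_iff.2 fun i _ => pow_ne_zero _ (hg0 i), ?_⟩
  · exact Ideal.mem_of_dvd _ (Finset.dvd_prod_of_mem _ (Finset.mem_univ i))
      (Ideal.pow_mem_pow (hgp i) _)
  · exact IsHomogeneous.prod _ _ _ fun i _ => by simpa only [one_mul] using (hg i).pow (m i)

theorem sum_le_two_mul_alpha_iInf_pointIdeal_pow {p : Fin 3 → Fin 3 → kk}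
    (hp : (Matrix.of p).det ≠ 0) (m : Fin 3 → ℕ) :
    ∑ i, m i ≤ 2 * alpha (⨅ i, pointIdeal (p i) ^ m i) := by
  obtain ⟨_, hm, hm0, hmh⟩ := exists_isHomogeneous_mem_iInf_pointIdeal_pow p m
  obtain ⟨f, hf, hf0, hfh⟩ := exists_isHomogeneous_alpha hm hm0 hmh
  have mem_span_pow (i : Fin 3) :
      pullbackRows (.of p) f ∈ Ideal.span (X '' {i}ᶜ : Set (MvPolynomial (Fin 3) kk)) ^ m i := by
    have map_mem := Ideal.mem_map_of_mem (pullbackRows (.of p)) (Ideal.mem_iInf.1 hf i)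
    rw [Ideal.map_pow] at map_mem
    exact Ideal.pow_right_mono (map_pullbackRows_pointIdeal_le (.of p) i) _ map_mem
  have pullback_ne_zero : pullbackRows (.of p) f ≠ 0 :=
    (map_ne_zero_iff _ (pullbackRows_injective hp.isUnit)).2 hf0
  have sum_add_alpha_le := sum_add_le_card_mul_of_mem_span_X_compl_pow mem_span_pow pullback_ne_zero
    (isHomogeneous_pullbackRows _ hfh)
  rw [Fintype.card_fin] at sum_add_alpha_le
  lia

theorem det_ne_zero_of_not_collinear {p₁ p₂ p₃ : Fin 3 → kk}
    (hncol : ¬ ∃ g : MvPolynomial (Fin 3) kk, g ≠ 0 ∧ g.IsHomogeneous 1 ∧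
      eval p₁ g = 0 ∧ eval p₂ g = 0 ∧ eval p₃ g = 0) :
    (Matrix.of ![p₁, p₂, p₃]).det ≠ 0 := fun hdet =>
  let ⟨g, hg0, hg, hgp⟩ := exists_isHomogeneous_one_eval_row_eq_zero hdet
  hncol ⟨g, hg0, hg, hgp 0, hgp 1, hgp 2⟩

theorem five_mul_le_two_mul_alpha_two_double_points {p₁ p₂ p₃ : Fin 3 → kk}
    (hdet : (Matrix.of ![p₁, p₂, p₃]).det ≠ 0) (k : ℕ) :
    5 * k ≤ 2 * alpha (pointIdeal p₁ ^ (2 * k) ⊓ pointIdeal p₂ ^ (2 * k) ⊓ pointIdeal p₃ ^ k) := by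
  have iInf_eq : ⨅ i, pointIdeal (![p₁, p₂, p₃] i) ^ ![2 * k, 2 * k, k] i =
      pointIdeal p₁ ^ (2 * k) ⊓ pointIdeal p₂ ^ (2 * k) ⊓ pointIdeal p₃ ^ k := by
    ext f
    simp [Fin.forall_fin_succ, and_assoc]
  calc 5 * k = ∑ i, ![2 * k, 2 * k, k] i := by
        simp only [Fin.sum_univ_three, Matrix.cons_val]
        lia
    _ ≤ _ := iInf_eq ▸ sum_le_two_mul_alpha_iInf_pointIdeal_pow hdet _

end Alpha

theorem waldschmidt_two_double_points_ge_general {kk : Type*} [Field kk] (p₁ p₂ p₃ : Fin 3 → kk)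
    (hncol : ¬ ∃ g : MvPolynomial (Fin 3) kk, g ≠ 0 ∧ g.IsHomogeneous 1 ∧
      eval p₁ g = 0 ∧ eval p₂ g = 0 ∧ eval p₃ g = 0) :
    (⨅ k : ℕ+, (alpha (pointIdeal p₁ ^ (2 * (k : ℕ)) ⊓ pointIdeal p₂ ^ (2 * (k : ℕ)) ⊓
        pointIdeal p₃ ^ (k : ℕ)) : ℝ) / ((k : ℕ) : ℝ)) ≥ 5 / 2 := by
  refine le_ciInf fun k => ?_
  rw [div_le_div_iff₀ two_pos (Nat.cast_pos.2 k.pos), mul_comm (alpha _ : ℝ)]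
  have hdet := det_ne_zero_of_not_collinear hncol
  exact_mod_cast five_mul_le_two_mul_alpha_two_double_points hdet k

/-- Let `p₁, p₂, p₃` be three distinct non-collinear points of `ℙ²` and
let `Z' = 2p₁ + 2p₂ + p₃`.  Then `α̂(I(Z')) ≥ 5/2`. -/
theorem waldschmidt_two_double_points_ge
    {kk : Type*} [Field kk] [IsAlgClosed kk]
    (p₁ p₂ p₃ : Fin 3 → kk)
    (hp10 : p₁ ≠ 0) (hp20 : p₂ ≠ 0) (hp30 : p₃ ≠ 0)
    (hp12 : ¬ projEq p₁ p₂) (hp13 : ¬ projEq p₁ p₃) (hp23 : ¬ projEq p₂ p₃)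
    (hncol : ¬ ∃ g : MvPolynomial (Fin 3) kk, g ≠ 0 ∧ g.IsHomogeneous 1 ∧
      MvPolynomial.eval p₁ g = 0 ∧ MvPolynomial.eval p₂ g = 0 ∧
      MvPolynomial.eval p₃ g = 0) :
    (⨅ k : ℕ+, (alpha (pointIdeal p₁ ^ (2 * (k : ℕ)) ⊓ pointIdeal p₂ ^ (2 * (k : ℕ)) ⊓
        pointIdeal p₃ ^ (k : ℕ)) : ℝ) / ((k : ℕ) : ℝ)) ≥ 5 / 2 :=
  waldschmidt_two_double_points_ge_general p₁ p₂ p₃ hncol
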